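/- Let x₀ be an interior point of I and let f, g, h : I → ℝ be continuous and strictly monotone. Suppose f and g are right-differentiable at x₀ with f'₊(x₀) ≠ 0 and g'₊(x₀) ≠ 0, and that A^[f] ≤ A^[h] ≤ A^[g]. Then h is right-differentiable at x₀ and h'₊(x₀) ≠ 0. (The analogous statement holds for left-sided derivatives.) -/

import Mathlib

/-!
Replacing a generator by its negative does not change its mean, so `f` and `h` may be taken
increasing. Then `A^[f] ≤ A^[h]`, applied to pairs, says that `φ = h ∘ f⁻¹` is midpoint convex on
the interval `f(I)`; being monotone with an interval as image, `φ` is continuous, hence convex.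
A strictly increasing convex function has a positive right derivative at every interior point
(it is at least the slope of any chord arriving from the left), and the chain rule for `h = φ ∘ f`
concludes.
-/

open Set Function Filter

/-- The quasi-arithmetic mean generated by `f` on the interval `I`,
applied to a vector `a ∈ Iⁿ`: `f⁻¹((f a₁ + ⋯ + f aₙ)/n)`, where the
inverse of `f` is taken on `I`. -/
noncomputable def qam (I : Set ℝ) (f : ℝ → ℝ) {n : ℕ} (a : Fin n → ℝ) : ℝ :=
  Function.invFunOn f I ((∑ i, f (a i)) / n)

/-- The natural (pointwise) partial order on quasi-arithmetic means:
`A^[f] ≤ A^[g]` iff `A^[f](a) ≤ A^[g](a)` for every `n ≥ 1` and every `a ∈ Iⁿ`. -/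
def qamLE (I : Set ℝ) (f g : ℝ → ℝ) : Prop :=
  ∀ n : ℕ, 1 ≤ n → ∀ a : Fin n → ℝ, (∀ i, a i ∈ I) → qam I f a ≤ qam I g a

/-- `A^[f] = A^[g]` : equality of the two quasi-arithmetic means as means. -/
def qamEQ (I : Set ℝ) (f g : ℝ → ℝ) : Prop :=
  ∀ n : ℕ, 1 ≤ n → ∀ a : Fin n → ℝ, (∀ i, a i ∈ I) → qam I f a = qam I g a

/-- `f` is strictly monotone on `I` (strictly increasing or strictly decreasing). -/
def StrictMonoOrAntiOn (f : ℝ → ℝ) (I : Set ℝ) : Prop :=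
  StrictMonoOn f I ∨ StrictAntiOn f I

open scoped Topology

section Order

variable {α β : Type*} [TopologicalSpace α] [LinearOrder β] [TopologicalSpace β] [OrderTopology β]
  {f : α → β} {s : Set α} {x : α}

lemma exists_mem_lt_of_mem_interior [Preorder α] [(𝓝[<] x).NeBot] (hx : x ∈ interior s) :
    ∃ a ∈ s, a < x :=
  nonempty_of_mem <| inter_mem (mem_nhdsWithin_of_mem_nhds (mem_interior_iff_mem_nhds.1 hx))
    (self_mem_nhdsWithin : Iio x ∈ 𝓝[<] x)

lemma exists_mem_gt_of_mem_interior [Preorder α] [(𝓝[>] x).NeBot] (hx : x ∈ interior s) :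
    ∃ b ∈ s, x < b :=
  nonempty_of_mem <| inter_mem (mem_nhdsWithin_of_mem_nhds (mem_interior_iff_mem_nhds.1 hx))
    (self_mem_nhdsWithin : Ioi x ∈ 𝓝[>] x)

lemma mem_interior_image_of_strictMonoOn [Preorder α] [(𝓝[<] x).NeBot] [(𝓝[>] x).NeBot]
    (hf : StrictMonoOn f s) (hfs : (f '' s).OrdConnected) (hx : x ∈ interior s) :
    f x ∈ interior (f '' s) := by
  obtain ⟨a, ha, hax⟩ := exists_mem_lt_of_mem_interior hx
  obtain ⟨b, hb, hxb⟩ := exists_mem_gt_of_mem_interior hx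
  have hxs := interior_subset hx
  exact mem_interior_iff_mem_nhds.2 <| mem_of_superset
    (Icc_mem_nhds (hf ha hxs hax) (hf hxs hb hxb))
    (hfs.out (mem_image_of_mem f ha) (mem_image_of_mem f hb))

lemma continuousOn_of_monotoneOn_of_ordConnected_image [LinearOrder α] [OrderTopology α]
    [DenselyOrdered β] (hf : MonotoneOn f s) (hs : s.OrdConnected)
    (hfs : (f '' s).OrdConnected) : ContinuousOn f s := by
  have hmono : Monotone (s.imageFactorization f) := fun x y hxy => hf x.2 y.2 hxy
  have hcont := hmono.continuous_of_surjective imageFactorization_surjective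
  exact continuousOn_iff_continuous_domRestrict.2 (continuous_subtype_val.comp hcont)

end Order

section InvFunOn

variable {α β γ : Type*} [Nonempty α] {s : Set α} {f : α → β} {h : α → γ}

lemma invFunOn_comp_of_injective {e : β → γ} (he : Injective e) (f : α → β) (s : Set α) (b : β) :
    invFunOn (e ∘ f) s (e b) = invFunOn f s b := by
  unfold invFunOn
  congr! 4 <;> exact he.eq_iff

lemma image_comp_invFunOn (hf : InjOn f s) : h ∘ invFunOn f s '' (f '' s) = h '' s := by
  rw [image_comp, hf.invFunOn_image Subset.rfl]

lemma strictMonoOn_comp_invFunOn [LinearOrder α] [Preorder β] [Preorder γ]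
    (hf : StrictMonoOn f s) (hh : StrictMonoOn h s) : StrictMonoOn (h ∘ invFunOn f s) (f '' s) := by
  rintro _ ⟨a, ha, rfl⟩ _ ⟨b, hb, rfl⟩ hab
  have hinv := hf.injOn.leftInvOn_invFunOn
  simpa only [comp_apply, hinv ha, hinv hb] using hh ha hb ((hf.lt_iff_lt ha hb).1 hab)

end InvFunOn

/-- If `ψ` had a positive maximum, its leftmost maximum point would be the midpoint of two points
of which the left one has a strictly smaller value. -/
lemma nonpos_of_midpoint_le {ψ : ℝ → ℝ} {a b : ℝ} (hψ : ContinuousOn ψ (Icc a b))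
    (ha : ψ a ≤ 0) (hb : ψ b ≤ 0)
    (hmid : ∀ s ∈ Icc a b, ∀ t ∈ Icc a b, ψ (midpoint ℝ s t) ≤ midpoint ℝ (ψ s) (ψ t))
    {t : ℝ} (ht : t ∈ Icc a b) : ψ t ≤ 0 := by
  by_contra! hpos
  obtain ⟨z, hz, hzmax⟩ := isCompact_Icc.exists_isMaxOn ⟨t, ht⟩ hψ
  have hzpos : 0 < ψ z := hpos.trans_le (hzmax ht)
  have hargmax : IsCompact (Icc a b ∩ ψ ⁻¹' {ψ z}) :=
    isCompact_Icc.of_isClosed_subset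
      (hψ.preimage_isClosed_of_isClosed isClosed_Icc isClosed_singleton) inter_subset_left
  obtain ⟨c, ⟨hc, hcz : ψ c = ψ z⟩, hleast⟩ := hargmax.exists_isLeast ⟨z, hz, rfl⟩
  have hac : a < c := hc.1.lt_of_ne (by rintro rfl; linarith)
  have hcb : c < b := hc.2.lt_of_ne (by rintro rfl; linarith)
  obtain ⟨δ, hδ, hδle⟩ : ∃ δ, 0 < δ ∧ δ ≤ min (c - a) (b - c) :=
    ⟨_, lt_min (sub_pos.2 hac) (sub_pos.2 hcb), le_rfl⟩
  obtain ⟨hδa, hδb⟩ := le_min_iff.1 hδle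
  have hl : c - δ ∈ Icc a b := ⟨by linarith, by linarith⟩
  have hr : c + δ ∈ Icc a b := ⟨by linarith, by linarith⟩
  have hlt : ψ (c - δ) < ψ z :=
    lt_of_le_of_ne (hzmax hl) fun he => by linarith [hleast ⟨hl, he⟩]
  have hle : ψ (c + δ) ≤ ψ z := hzmax hr
  have hmid_c := hmid _ hl _ hr
  rw [midpoint_sub_add, midpoint_eq_smul_add, smul_eq_mul, invOf_eq_inv] at hmid_c
  linarith

lemma convexOn_of_midpoint_le {E : Type*} [AddCommGroup E] [Module ℝ E] [TopologicalSpace E]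
    [IsTopologicalAddGroup E] [ContinuousSMul ℝ E] {s : Set E} {φ : E → ℝ} (hs : Convex ℝ s)
    (hφ : ContinuousOn φ s)
    (hmid : ∀ x ∈ s, ∀ y ∈ s, φ (midpoint ℝ x y) ≤ midpoint ℝ (φ x) (φ y)) :
    ConvexOn ℝ s φ := by
  refine ⟨hs, fun x hx y hy u v hu hv huv => ?_⟩
  let seg : ℝ →ᵃ[ℝ] E := AffineMap.lineMap x y
  let chord : ℝ →ᵃ[ℝ] ℝ := AffineMap.lineMap (φ x) (φ y)
  have hseg : MapsTo seg (Icc 0 1) s := fun t ht => hs.lineMap_mem hx hy ht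
  have hcont : ContinuousOn (fun t => φ (seg t) - chord t) (Icc 0 1) :=
    (hφ.comp AffineMap.lineMap_continuous.continuousOn hseg).sub
      AffineMap.lineMap_continuous.continuousOn
  have hle : φ (seg v) - chord v ≤ 0 := by
    refine nonpos_of_midpoint_le hcont (by simp [seg, chord]) (by simp [seg, chord])
      (fun t ht t' ht' => ?_) ⟨hv, by linarith⟩
    simp only [seg.map_midpoint, chord.map_midpoint, ← vsub_eq_sub, ← midpoint_vsub_midpoint]
    exact sub_le_sub_right (hmid _ (hseg ht) _ (hseg ht')) _
  obtain rfl : u = 1 - v := by linarith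
  simpa [seg, chord, AffineMap.lineMap_apply_module] using hle

lemma rightDeriv_pos_of_convexOn_of_strictMonoOn {s : Set ℝ} {φ : ℝ → ℝ} {x : ℝ}
    (hφ : ConvexOn ℝ s φ) (hmono : StrictMonoOn φ s) (hx : x ∈ interior s) :
    0 < derivWithin φ (Ioi x) x := by
  obtain ⟨a, ha, hax⟩ := exists_mem_lt_of_mem_interior hx
  calc
    0 < slope φ a x := by
      rw [slope_def_field]
      exact div_pos (sub_pos.2 (hmono ha (interior_subset hx) hax)) (sub_pos.2 hax)
    _ ≤ derivWithin φ (Iio x) x := hφ.slope_le_leftDeriv_of_mem_interior ha hx hax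
    _ ≤ derivWithin φ (Ioi x) x := hφ.leftDeriv_le_rightDeriv_of_mem_interior hx

section QuasiArithmeticMean

variable {I : Set ℝ} {f h : ℝ → ℝ}

lemma qam_neg (I : Set ℝ) (f : ℝ → ℝ) {n : ℕ} (a : Fin n → ℝ) : qam I (-f) a = qam I f a := by
  have hmean : (∑ i, (-f) (a i)) / (n : ℝ) = -((∑ i, f (a i)) / n) := by
    simp only [Pi.neg_apply, Finset.sum_neg_distrib, neg_div]
  rw [qam, hmean]
  exact invFunOn_comp_of_injective neg_injective f I _

lemma qam_pair (I : Set ℝ) (f : ℝ → ℝ) (a b : ℝ) :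
    qam I f ![a, b] = invFunOn f I (midpoint ℝ (f a) (f b)) := by
  simp [qam, midpoint_eq_smul_add, div_eq_inv_mul]

lemma midpoint_mem_image (hf : (f '' I).OrdConnected) {a b : ℝ} (ha : a ∈ I) (hb : b ∈ I) :
    midpoint ℝ (f a) (f b) ∈ f '' I :=
  hf.convex.midpoint_mem (mem_image_of_mem f ha) (mem_image_of_mem f hb)

lemma qam_pair_mem (hf : (f '' I).OrdConnected) {a b : ℝ} (ha : a ∈ I) (hb : b ∈ I) :
    qam I f ![a, b] ∈ I := by
  rw [qam_pair]
  exact invFunOn_mem (midpoint_mem_image hf ha hb)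

lemma apply_qam_pair (hf : (f '' I).OrdConnected) {a b : ℝ} (ha : a ∈ I) (hb : b ∈ I) :
    f (qam I f ![a, b]) = midpoint ℝ (f a) (f b) := by
  rw [qam_pair]
  exact invFunOn_eq (midpoint_mem_image hf ha hb)

lemma convexOn_comp_invFunOn (hf : StrictMonoOn f I) (hh : StrictMonoOn h I)
    (hfI : (f '' I).OrdConnected) (hhI : (h '' I).OrdConnected)
    (hle : ∀ a ∈ I, ∀ b ∈ I, qam I f ![a, b] ≤ qam I h ![a, b]) :
    ConvexOn ℝ (f '' I) (h ∘ invFunOn f I) := by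
  have hcont : ContinuousOn (h ∘ invFunOn f I) (f '' I) :=
    continuousOn_of_monotoneOn_of_ordConnected_image (strictMonoOn_comp_invFunOn hf hh).monotoneOn
      hfI (by rwa [image_comp_invFunOn hf.injOn])
  refine convexOn_of_midpoint_le hfI.convex hcont ?_
  rintro _ ⟨a, ha, rfl⟩ _ ⟨b, hb, rfl⟩
  have hinv := hf.injOn.leftInvOn_invFunOn
  calc
    h (invFunOn f I (midpoint ℝ (f a) (f b))) = h (qam I f ![a, b]) := by rw [qam_pair]
    _ ≤ h (qam I h ![a, b]) :=
      hh.monotoneOn (qam_pair_mem hfI ha hb) (qam_pair_mem hhI ha hb) (hle a ha b hb)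
    _ = midpoint ℝ (h a) (h b) := apply_qam_pair hhI ha hb
    _ = midpoint ℝ ((h ∘ invFunOn f I) (f a)) ((h ∘ invFunOn f I) (f b)) := by
      rw [comp_apply, comp_apply, hinv ha, hinv hb]

lemma exists_pos_hasDerivWithinAt_mul_of_strictMonoOn {x₀ : ℝ} (hx₀ : x₀ ∈ interior I)
    (hf : StrictMonoOn f I) (hh : StrictMonoOn h I)
    (hfI : (f '' I).OrdConnected) (hhI : (h '' I).OrdConnected)
    (hle : ∀ a ∈ I, ∀ b ∈ I, qam I f ![a, b] ≤ qam I h ![a, b])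
    {df : ℝ} (hfd : HasDerivWithinAt f df (Ioi x₀) x₀) :
    ∃ c : ℝ, 0 < c ∧ HasDerivWithinAt h (c * df) (Ioi x₀) x₀ := by
  have hxI := interior_subset hx₀
  have hconv := convexOn_comp_invFunOn hf hh hfI hhI hle
  have hfx : f x₀ ∈ interior (f '' I) := mem_interior_image_of_strictMonoOn hf hfI hx₀
  refine ⟨_, rightDeriv_pos_of_convexOn_of_strictMonoOn hconv
    (strictMonoOn_comp_invFunOn hf hh) hfx, ?_⟩
  have hmaps : MapsTo f (Ioi x₀ ∩ I) (Ioi (f x₀)) := fun y hy => hf hxI hy.2 hy.1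
  have hcomp := (hconv.hasDerivWithinAt_rightDeriv_of_mem_interior hfx).comp x₀
    (hfd.mono inter_subset_left) hmaps
  have hEq : EqOn h ((h ∘ invFunOn f I) ∘ f) I := fun y hy =>
    congrArg h (hf.injOn.leftInvOn_invFunOn hy).symm
  exact (hcomp.congr (hEq.mono inter_subset_right) (hEq hxI)).mono_of_mem_nhdsWithin
    (inter_mem_nhdsWithin _ (mem_interior_iff_mem_nhds.1 hx₀))

theorem right_deriv_nonzero_interval_type_general (hI : I.OrdConnected) {x₀ : ℝ}
    (hx₀ : x₀ ∈ interior I) (hfc : ContinuousOn f I) (hhc : ContinuousOn h I)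
    (hfm : StrictMonoOrAntiOn f I) (hhm : StrictMonoOrAntiOn h I)
    {df : ℝ} (hdf : df ≠ 0) (hfd : HasDerivWithinAt f df (Ioi x₀) x₀)
    (hle : ∀ a ∈ I, ∀ b ∈ I, qam I f ![a, b] ≤ qam I h ![a, b]) :
    ∃ d : ℝ, d ≠ 0 ∧ HasDerivWithinAt h d (Ioi x₀) x₀ := by
  wlog hf : StrictMonoOn f I generalizing f df
  · have hf' : StrictMonoOn (-f) I := (hfm.resolve_left hf).neg
    exact this hfc.neg (Or.inl hf') (neg_ne_zero.2 hdf) hfd.neg (by simpa only [qam_neg]) hf'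
  wlog hh : StrictMonoOn h I generalizing h
  · have hh' : StrictMonoOn (-h) I := (hhm.resolve_left hh).neg
    obtain ⟨d, hd, hhd⟩ := this hhc.neg (Or.inl hh') (by simpa only [qam_neg]) hh'
    exact ⟨-d, neg_ne_zero.2 hd, by simpa only [neg_neg] using hhd.neg⟩
  obtain ⟨c, hc, hhd⟩ := exists_pos_hasDerivWithinAt_mul_of_strictMonoOn hx₀ hf hh
    (hI.isPreconnected.image f hfc).ordConnected (hI.isPreconnected.image h hhc).ordConnected
    hle hfd
  exact ⟨c * df, mul_ne_zero hc.ne' hdf, hhd⟩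

end QuasiArithmeticMean

/-- Corollary 2: if `f, g` are right-differentiable at an interior
point `x₀` with nonvanishing right derivatives and `A^[f] ≤ A^[h] ≤ A^[g]`, then `h`
is right-differentiable at `x₀` with nonvanishing right derivative. -/
theorem right_deriv_nonzero_interval_type
    (I : Set ℝ) (hI : I.OrdConnected) (hInontriv : ∃ x ∈ I, ∃ y ∈ I, x < y)
    (x₀ : ℝ) (hx₀ : x₀ ∈ interior I)
    (f g h : ℝ → ℝ)
    (hfc : ContinuousOn f I) (hgc : ContinuousOn g I) (hhc : ContinuousOn h I)
    (hfm : StrictMonoOrAntiOn f I) (hgm : StrictMonoOrAntiOn g I)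
    (hhm : StrictMonoOrAntiOn h I)
    (df : ℝ) (hdf : df ≠ 0) (hfd : HasDerivWithinAt f df (Ioi x₀) x₀)
    (dg : ℝ) (hdg : dg ≠ 0) (hgd : HasDerivWithinAt g dg (Ioi x₀) x₀)
    (hle₁ : qamLE I f h) (hle₂ : qamLE I h g) :
    ∃ d : ℝ, d ≠ 0 ∧ HasDerivWithinAt h d (Ioi x₀) x₀ := by
  exact right_deriv_nonzero_interval_type_general hI hx₀ hfc hhc hfm hhm hdf hfd
    fun a ha b hb => hle₁ 2 one_le_two ![a, b] (Fin.forall_fin_two.2 ⟨ha, hb⟩)
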